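/- Let 𝔸 be a finite relational structure and k ∈ ℕ. Assume that 𝔸 has pathwidth duality k−1 and let s ∈ ℕ be such that 𝒫_{𝔸^(k)}^s(I) ⊢ G for each unsatisfiable path instance I of CSP(𝔸^(k)). Then 𝒫_𝔸^{k(s+2)} decides CSP(𝔸), i.e., for every instance I of CSP(𝔸), 𝒫_𝔸^{k(s+2)}(I) ⊢ G if and only if I is unsatisfiable. -/

import Mathlib

/-!
Soundness holds because every rule is consistent with `𝔸`. For completeness, replace the variables
of an unsatisfiable instance by infinitely many copies and keep only the constraints with injective
scope; by the pigeonhole principle over the finite domain the result is still unsatisfiable.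
Pathwidth duality provides an unsatisfiable instance `J` of pathwidth at most `k - 1` mapping to it,
and the scopes of `J` are injective, so their arity is at most the bag size `k`. Listing the bags of
a path decomposition of `J` as `k`-tuples gives an unsatisfiable path instance of `𝔸^(k)`. Finally a
derivation of `𝒫_{𝔸^(k)}^s` on that path instance is unpacked into a derivation of `𝒫_𝔸^{s * k}`
on `J`, by replacing each variable of a rule with a `k`-tuple of variables.
-/

namespace CSPPaper

/-- A relational structure on `A`: a family of finitary relations (the basic
relations), a relation of arity `n` being a set of `n`-tuples `Fin n → A`. -/
structure RelStruct (A : Type) where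
  basic : Set (Σ n : ℕ, Set (Fin n → A))

/-- A CSP instance with variables `V` over domain `A`: a set of constraints,
each consisting of a scope (a tuple of variables) and a constraint relation. -/
structure Instance (A : Type) (V : Type) where
  constraints : Set (Σ n : ℕ, (Fin n → V) × Set (Fin n → A))

/-- `f : V → A` is a solution of the instance `I`. -/
def Instance.Sol {A V : Type} (I : Instance A V) (f : V → A) : Prop :=
  ∀ c ∈ I.constraints, (fun i => f (c.2.1 i)) ∈ c.2.2

def Instance.Satisfiable {A V : Type} (I : Instance A V) : Prop :=
  ∃ f, I.Sol f

/-- `I` is an instance of `CSP(𝔸)`: all its constraint relations are basic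
relations of `𝔸`. -/
def IsCSPInstance {A V : Type} (𝔸 : RelStruct A) (I : Instance A V) : Prop :=
  ∀ c ∈ I.constraints, (⟨c.1, c.2.2⟩ : Σ n : ℕ, Set (Fin n → A)) ∈ 𝔸.basic

/-- An atom of a Datalog rule over the variable set `Fin r`: a predicate
(a relation on `A`) applied to a tuple of variables. -/
structure Atom (A : Type) (r : ℕ) where
  arity : ℕ
  scope : Fin arity → Fin r
  rel : Set (Fin arity → A)

def Atom.holds {A : Type} {r : ℕ} (a : Atom A r) (f : Fin r → A) : Prop :=
  (fun i => f (a.scope i)) ∈ a.rel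

/-- A rule of the `r`-ary maximal symmetric Datalog program `𝒫_𝔸^r` consistent
with `𝔸`: a linear Datalog rule on at most `r` variables, whose head is an IDB
(an arbitrary relation on `A` of arity at most `r`), whose body contains at most
one IDB atom (`idb`) and otherwise non-IDB atoms for basic relations of `𝔸`
of arity at most `r` (`edb`, without repetition), such that the rule is
consistent with `𝔸`, and, if the body contains an IDB atom, its mirror image is
also consistent with `𝔸`. -/
structure Rule (A : Type) (𝔸 : RelStruct A) (r : ℕ) where
  head : Atom A r
  idb : Option (Atom A r)
  edb : List (Atom A r)
  head_arity : head.arity ≤ r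
  idb_arity : ∀ a ∈ idb, a.arity ≤ r
  edb_arity : ∀ a ∈ edb, a.arity ≤ r
  edb_basic : ∀ a ∈ edb, (⟨a.arity, a.rel⟩ : Σ n : ℕ, Set (Fin n → A)) ∈ 𝔸.basic
  nodup : edb.Nodup
  consistent : ∀ f : Fin r → A,
    (∀ a ∈ idb, a.holds f) → (∀ a ∈ edb, a.holds f) → head.holds f
  mirror : ∀ a ∈ idb, ∀ f : Fin r → A,
    head.holds f → (∀ b ∈ edb, b.holds f) → a.holds f

/-- `Derives 𝔸 r I ρ R`: the `r`-ary maximal symmetric Datalog program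
`𝒫_𝔸^r` consistent with `𝔸`, run on the instance `I`, derives `R(ρ)`.
This holds if `(ρ, R)` is a constraint of `I`, or if some rule of `𝒫_𝔸^r`
with head `R(τ)` admits an evaluation `ω` of its variables into `V` with
`ω ∘ τ = ρ`, whose (at most one) IDB body atom is derived and whose non-IDB
body atoms are constraints of `I` under `ω`. -/
inductive Derives {A V : Type} (𝔸 : RelStruct A) (r : ℕ) (I : Instance A V) :
    ∀ {n : ℕ}, (Fin n → V) → Set (Fin n → A) → Prop
  | base {n : ℕ} (ρ : Fin n → V) (R : Set (Fin n → A)) :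
      (⟨n, ρ, R⟩ : Σ n : ℕ, (Fin n → V) × Set (Fin n → A)) ∈ I.constraints →
      Derives 𝔸 r I ρ R
  | step (rule : Rule A 𝔸 r) (ω : Fin r → V) :
      (∀ a ∈ rule.idb, Derives 𝔸 r I (fun i => ω (a.scope i)) a.rel) →
      (∀ a ∈ rule.edb,
        (⟨a.arity, fun i => ω (a.scope i), a.rel⟩ :
          Σ n : ℕ, (Fin n → V) × Set (Fin n → A)) ∈ I.constraints) →
      Derives 𝔸 r I (fun i => ω (rule.head.scope i)) rule.head.rel

/-- `𝒫_𝔸^r(I) ⊢ G`: the program derives a goal predicate, i.e. an empty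
relation of arity at most `r`. -/
def DerivesGoal {A V : Type} (𝔸 : RelStruct A) (r : ℕ) (I : Instance A V) : Prop :=
  ∃ (n : ℕ) (ρ : Fin n → V), n ≤ r ∧ Derives 𝔸 r I ρ (∅ : Set (Fin n → A))

/-- `𝒫_𝔸^r(I) ⊢ J`: the program run on `I` derives every constraint of `J`. -/
def DerivesInstance {A V : Type} (𝔸 : RelStruct A) (r : ℕ) (I J : Instance A V) : Prop :=
  ∀ c ∈ J.constraints, Derives 𝔸 r I c.2.1 c.2.2

/-- An `m`-ary operation `t` preserves the `n`-ary relation `R`. -/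
def PreservesRel {A : Type} {m n : ℕ} (t : (Fin m → A) → A) (R : Set (Fin n → A)) : Prop :=
  ∀ rows : Fin m → Fin n → A, (∀ j, rows j ∈ R) → (fun i => t (fun j => rows j i)) ∈ R

/-- A polymorphism of `𝔸`: an operation preserving all basic relations. -/
def IsPolymorphism {A : Type} {m : ℕ} (𝔸 : RelStruct A) (t : (Fin m → A) → A) : Prop :=
  ∀ R ∈ 𝔸.basic, PreservesRel t R.2

def ternaryOp {A : Type} (p : A → A → A → A) : (Fin 3 → A) → A :=
  fun v => p (v 0) (v 1) (v 2)

/-- A chain of `n` Hagemann–Mitschke terms: idempotent ternary operations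
`p 0, …, p n` with `p 0 x y z = x`, `p k x x y = p (k+1) x y y`, `p n x y z = z`. -/
def IsHMChain {A : Type} (n : ℕ) (p : ℕ → A → A → A → A) : Prop :=
  (∀ k ≤ n, ∀ x : A, p k x x x = x) ∧
  (∀ x y z : A, p 0 x y z = x) ∧
  (∀ x y z : A, p n x y z = z) ∧
  (∀ k < n, ∀ x y : A, p k x x y = p (k + 1) x y y)

def Pres3Set {A : Type} (p : A → A → A → A) (S : Set A) : Prop :=
  ∀ x y z, x ∈ S → y ∈ S → z ∈ S → p x y z ∈ S

def Pres3Rel {A : Type} (p : A → A → A → A) (E : Set (A × A)) : Prop :=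
  ∀ u v w, u ∈ E → v ∈ E → w ∈ E → (p u.1 v.1 w.1, p u.2 v.2 w.2) ∈ E

def PresOpSet {A : Type} {m : ℕ} (t : (Fin m → A) → A) (S : Set A) : Prop :=
  ∀ x : Fin m → A, (∀ j, x j ∈ S) → t x ∈ S

def PresOpRel {A : Type} {m : ℕ} (t : (Fin m → A) → A) (E : Set (A × A)) : Prop :=
  ∀ x y : Fin m → A, (∀ j, (x j, y j) ∈ E) → (t x, t y) ∈ E

/-- A path instance of length `len`: variables `1, …, len`, one unary
constraint `B i` on each variable `i ∈ [1, len]`, and one binary constraint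
`E i` with scope `(i, i+1)` for each `i ∈ [1, len-1]`. -/
structure PathInstance (A : Type) where
  len : ℕ
  B : ℕ → Set A
  E : ℕ → Set (A × A)

/-- A solution of the subinstance of the path instance `I` induced by `[a, b]`. -/
def IsSolutionOn {A : Type} (I : PathInstance A) (a b : ℕ) (s : ℕ → A) : Prop :=
  (∀ i, a ≤ i → i ≤ b → s i ∈ I.B i) ∧
  (∀ i, a ≤ i → i + 1 ≤ b → (s i, s (i + 1)) ∈ I.E i)

def IsSolution {A : Type} (I : PathInstance A) (s : ℕ → A) : Prop :=
  IsSolutionOn I 1 I.len s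

def unaryRel {A : Type} (S : Set A) : Set (Fin 1 → A) := {f | f 0 ∈ S}

def pairRel {A : Type} (E : Set (A × A)) : Set (Fin 2 → A) := {f | (f 0, f 1) ∈ E}

/-- The path instance `I`, presented as a CSP instance on the variable set `ℕ`. -/
def PathInstance.toInstance {A : Type} (I : PathInstance A) : Instance A ℕ where
  constraints :=
    {c | (∃ i, 1 ≤ i ∧ i ≤ I.len ∧
            c = ⟨1, fun _ => i, unaryRel (I.B i)⟩) ∨
         (∃ i, 1 ≤ i ∧ i + 1 ≤ I.len ∧
            c = ⟨2, ![i, i + 1], pairRel (I.E i)⟩)}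

/-- An `n`-braid in the path instance `I`: solutions `s 0, …, s n` and indices
`1 ≤ idx 1 < … < idx n ≤ I.len` with `s k (idx k) = s (k+1) (idx k)` and
`s (k-1) (idx (k+1)) = s k (idx (k+1))` for `k = 1, …, n-1`. -/
def IsBraid {A : Type} (I : PathInstance A) (n : ℕ) (s : ℕ → ℕ → A) (idx : ℕ → ℕ) : Prop :=
  (∀ k ≤ n, IsSolution I (s k)) ∧
  1 ≤ idx 1 ∧ idx n ≤ I.len ∧
  (∀ k, 1 ≤ k → k < n → idx k < idx (k + 1)) ∧
  (∀ k, 1 ≤ k → k + 1 ≤ n →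
    s k (idx k) = s (k + 1) (idx k) ∧ s (k - 1) (idx (k + 1)) = s k (idx (k + 1)))

/-- The binary constraint of `I` with scope `(i, i+1)` is subdirect. -/
def SubdirectAt {A : Type} (I : PathInstance A) (i : ℕ) : Prop :=
  (I.B i).Nonempty ∧ (I.B (i + 1)).Nonempty ∧
  (∀ a ∈ I.B i, ∃ b ∈ I.B (i + 1), (a, b) ∈ I.E i) ∧
  (∀ b ∈ I.B (i + 1), ∃ a ∈ I.B i, (a, b) ∈ I.E i)

/-- The subinstance of `I` induced by `[a, b]` is subdirect. -/
def SubdirectOn {A : Type} (I : PathInstance A) (a b : ℕ) : Prop :=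
  ∀ i, a ≤ i → i + 1 ≤ b → SubdirectAt I i

def Subdirect {A : Type} (I : PathInstance A) : Prop := SubdirectOn I 1 I.len

/-- The sets `C_i`: `C 1 = B 1` and
`C (i+1) = {b ∈ B (i+1) | ∃ c ∈ C i, (c, b) ∈ E i}`. -/
def reachSet {A : Type} (I : PathInstance A) : ℕ → Set A
  | 0 => ∅
  | 1 => I.B 1
  | (i + 2) => {b ∈ I.B (i + 2) | ∃ c ∈ reachSet I (i + 1), (c, b) ∈ I.E (i + 1)}

/-- `B_{i,i+1}` contains a backward edge: an edge `(b, c) ∈ E i` with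
`b ∈ B i \ C i` and `c ∈ C (i+1)`. -/
def BackwardAt {A : Type} (I : PathInstance A) (i : ℕ) : Prop :=
  1 ≤ i ∧ i + 1 ≤ I.len ∧
  ∃ b c, (b, c) ∈ I.E i ∧ b ∈ I.B i ∧ b ∉ reachSet I i ∧ c ∈ reachSet I (i + 1)

/-- Adjacency in the graph `Conn(I_{[lo,hi]})`: its vertices are pairs `(i, a)`
with `a ∈ B i`, `lo ≤ i ≤ hi`, and `(i, a)` is adjacent to `(i+1, b)` whenever
`(a, b) ∈ E i`. -/
def connAdj {A : Type} (I : PathInstance A) (lo hi : ℕ) (p q : ℕ × A) : Prop :=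
  lo ≤ p.1 ∧ p.1 + 1 ≤ hi ∧ q.1 = p.1 + 1 ∧
  p.2 ∈ I.B p.1 ∧ q.2 ∈ I.B q.1 ∧ (p.2, q.2) ∈ I.E p.1

/-- `λ_{I,lo,hi}`: the pairs `(a, b) ∈ B lo × B hi` joined by an undirected path
in `Conn(I_{[lo,hi]})`. -/
def lamRel {A : Type} (I : PathInstance A) (lo hi : ℕ) : Set (A × A) :=
  {ab | ab.1 ∈ I.B lo ∧ ab.2 ∈ I.B hi ∧
    Relation.ReflTransGen (fun p q => connAdj I lo hi p q ∨ connAdj I lo hi q p)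
      (lo, ab.1) (hi, ab.2)}

open Classical in
/-- The variable set `U` of the instance `I_λ`: the variables `1`, `len`, and
`i, i+1` for every index `i` such that `B_{i,i+1}` has a backward edge. -/
noncomputable def lamVars {A : Type} (I : PathInstance A) : Finset ℕ :=
  (Finset.Icc 1 I.len).filter
    (fun v => v = 1 ∨ v = I.len ∨ BackwardAt I v ∨ (2 ≤ v ∧ BackwardAt I (v - 1)))

/-- The `t`-th smallest element of `U` (`1`-indexed). -/
noncomputable def lamEnum {A : Type} (I : PathInstance A) (t : ℕ) : ℕ :=
  ((lamVars I).sort (· ≤ ·)).getD (t - 1) 0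

/-- The instance `I_λ`, presented as a path instance whose `t`-th variable is
the `t`-th smallest element of `U`: it consists of the subinstance of `I`
induced by `U`, where each gap between consecutive elements `u < w` of `U` with
`w > u + 1` is filled by the binary constraint `λ_{I,u,w}`. -/
noncomputable def lamInst {A : Type} (I : PathInstance A) : PathInstance A where
  len := (lamVars I).card
  B := fun t => I.B (lamEnum I t)
  E := fun t =>
    if lamEnum I (t + 1) = lamEnum I t + 1 then I.E (lamEnum I t)
    else lamRel I (lamEnum I t) (lamEnum I (t + 1))

/-- Unpacking an `m`-tuple of elements of `V^k` into an `m*k`-tuple of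
elements of `V`. -/
def unpackTuple {X : Type} {m k : ℕ} (σ : Fin m → Fin k → X) : Fin (m * k) → X :=
  fun t => σ t.divNat t.modNat

/-- Unpacking an `m`-ary relation on `A^k` into an `m*k`-ary relation on `A`. -/
def unpackRel {A : Type} {m k : ℕ} (U : Set (Fin m → Fin k → A)) :
    Set (Fin (m * k) → A) :=
  {t | ∃ u ∈ U, ∀ i : Fin (m * k), t i = u i.divNat i.modNat}

/-- The instance `I` has pathwidth at most `p`. -/
def PathwidthLE {A V : Type} (I : Instance A V) (p : ℕ) : Prop :=
  ∃ (m : ℕ) (U : Fin m → Set V),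
    (∀ v : V, ∃ i, v ∈ U i) ∧
    (∀ i, (U i).Finite ∧ (U i).ncard ≤ p + 1) ∧
    (∀ i j q : Fin m, i ≤ q → q ≤ j → ∀ v, v ∈ U i → v ∈ U j → v ∈ U q) ∧
    (∀ c ∈ I.constraints, ∃ i, Set.range c.2.1 ⊆ U i)

/-- `𝔸` has pathwidth duality `p`: for every unsatisfiable instance `I` of
`CSP(𝔸)` there is an unsatisfiable instance `J` of `CSP(𝔸)` of pathwidth at
most `p` such that identifying some variables of `J` (along `h`) yields a
subinstance of `I`. -/
def HasPathwidthDuality {A : Type} (𝔸 : RelStruct A) (p : ℕ) : Prop :=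
  ∀ (V : Type) (I : Instance A V), IsCSPInstance 𝔸 I → ¬I.Satisfiable →
    ∃ (W : Type) (J : Instance A W) (h : W → V),
      IsCSPInstance 𝔸 J ∧ ¬J.Satisfiable ∧ PathwidthLE J p ∧
      ∀ c ∈ J.constraints,
        (⟨c.1, fun i => h (c.2.1 i), c.2.2⟩ :
          Σ n : ℕ, (Fin n → V) × Set (Fin n → A)) ∈ I.constraints

/-- The `k`-th bubble power `𝔸^(k)` of `𝔸`: the relational structure on `A^k`
whose basic relations are all unary relations definable as conjunctions of
basic relations of `𝔸` (with identification of variables and dummy variables,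
but no existential quantification), and all binary relations
`E_ℐ = {(a, b) | ∀ (i,j) ∈ ℐ, a i = b j}` for `ℐ ⊆ [k]²`. -/
def bubblePower {A : Type} (𝔸 : RelStruct A) (k : ℕ) : RelStruct (Fin k → A) where
  basic :=
    {r | (∃ L : Set (Σ n : ℕ, (Fin n → Fin k) × Set (Fin n → A)),
            (∀ c ∈ L, (⟨c.1, c.2.2⟩ : Σ n : ℕ, Set (Fin n → A)) ∈ 𝔸.basic) ∧
            r = ⟨1, {f : Fin 1 → (Fin k → A) |
                      ∀ c ∈ L, (fun i => f 0 (c.2.1 i)) ∈ c.2.2}⟩) ∨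
         (∃ Idx : Set (Fin k × Fin k),
            r = ⟨2, {f : Fin 2 → (Fin k → A) | ∀ q ∈ Idx, f 0 q.1 = f 1 q.2}⟩)}

section Derivations

variable {A V : Type} {𝔸 : RelStruct A} {r r' : ℕ} {I : Instance A V}

theorem Derives.mem_of_sol {g : V → A} (hg : I.Sol g) {n : ℕ} {ρ : Fin n → V}
    {R : Set (Fin n → A)} (h : Derives 𝔸 r I ρ R) : (fun i => g (ρ i)) ∈ R := by
  induction h with
  | base ρ R hc => exact hg _ hc
  | step rule ω _ hedb ih =>
    exact rule.consistent (fun i => g (ω i)) ih fun a ha => hg _ (hedb a ha)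

theorem DerivesGoal.not_satisfiable (h : DerivesGoal 𝔸 r I) : ¬I.Satisfiable := by
  rintro ⟨g, hg⟩
  obtain ⟨n, ρ, -, hρ⟩ := h
  exact hρ.mem_of_sol hg

theorem Derives.map {W : Type} {J : Instance A W} (φ : V → W)
    (hφ : ∀ c ∈ I.constraints, (⟨c.1, fun i => φ (c.2.1 i), c.2.2⟩ :
      Σ n : ℕ, (Fin n → W) × Set (Fin n → A)) ∈ J.constraints)
    {n : ℕ} {ρ : Fin n → V} {R : Set (Fin n → A)} (h : Derives 𝔸 r I ρ R) :
    Derives 𝔸 r J (fun i => φ (ρ i)) R := by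
  induction h with
  | base ρ R hc => exact .base _ R (hφ _ hc)
  | step rule ω _ hedb ih =>
    exact .step rule (fun i => φ (ω i)) ih fun a ha => hφ _ (hedb a ha)

theorem DerivesGoal.map {W : Type} {J : Instance A W} (φ : V → W)
    (hφ : ∀ c ∈ I.constraints, (⟨c.1, fun i => φ (c.2.1 i), c.2.2⟩ :
      Σ n : ℕ, (Fin n → W) × Set (Fin n → A)) ∈ J.constraints)
    (h : DerivesGoal 𝔸 r I) : DerivesGoal 𝔸 r J := by
  obtain ⟨n, ρ, hn, hρ⟩ := h
  exact ⟨n, _, hn, hρ.map φ hφ⟩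

theorem derivesGoal_of_isEmpty [IsEmpty V] (h : ¬I.Satisfiable) : DerivesGoal 𝔸 r I := by
  obtain ⟨⟨n, ρ, R⟩, hc, hR⟩ : ∃ c ∈ I.constraints, (fun i => isEmptyElim (c.2.1 i)) ∉ c.2.2 := by
    by_contra! hsol
    exact h ⟨isEmptyElim, hsol⟩
  obtain rfl : n = 0 := by simpa using Fintype.card_eq_zero_iff.mpr (Function.isEmpty ρ)
  obtain rfl : R = ∅ := Set.eq_empty_of_forall_notMem fun f hf =>
    hR (Subsingleton.elim f (fun i => isEmptyElim (ρ i)) ▸ hf)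
  exact ⟨0, ρ, Nat.zero_le r, .base ρ ∅ hc⟩

/-- The atom obtained from `a` by substituting the variable `e i` for each variable `i`. -/
def Atom.rename (a : Atom A r) (e : Fin r → Fin r') : Atom A r' where
  arity := a.arity
  scope i := e (a.scope i)
  rel := a.rel

/-- The atoms over the rule variables `Fin r`, of arity at most `r`, that the evaluation `ω` turns
into constraints of `I`: the largest possible non-IDB body of a rule applied under `ω`. -/
def visibleAtoms (I : Instance A V) (ω : Fin r → V) : Set (Atom A r) :=
  {a | a.arity ≤ r ∧ (⟨a.arity, fun i => ω (a.scope i), a.rel⟩ :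
    Σ n : ℕ, (Fin n → V) × Set (Fin n → A)) ∈ I.constraints}

theorem finite_visibleAtoms [Finite A] (I : Instance A V) (ω : Fin r → V) :
    (visibleAtoms I ω).Finite := by
  have hfin : (⋃ n ∈ Set.Iic r, Set.range fun p : (Fin n → Fin r) × Set (Fin n → A) =>
      (⟨n, p.1, p.2⟩ : Atom A r)).Finite :=
    (Set.finite_Iic r).biUnion fun n _ => Set.finite_range _
  exact hfin.subset fun a ha => Set.mem_biUnion (Set.mem_Iic.mpr ha.1) ⟨(a.scope, a.rel), rfl⟩

theorem rename_mem_visibleAtoms {ω : Fin r → V} {ω' : Fin r' → V} {e : Fin r → Fin r'}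
    (hr : r ≤ r') (he : ∀ i, ω' (e i) = ω i) {a : Atom A r} (ha : a ∈ visibleAtoms I ω) :
    a.rename e ∈ visibleAtoms I ω' := by
  refine ⟨ha.1.trans hr, ?_⟩
  simpa only [Atom.rename, he] using ha.2

/-- An assignment of the rule variables that is consistent with everything a rule can see of `I`
under the evaluation `ω`: it respects the identifications made by `ω` and satisfies all visible
atoms. -/
structure IsLocalSolution (I : Instance A V) (ω : Fin r → V) (f : Fin r → A) : Prop where
  factorsThrough : f.FactorsThrough ω
  holds : ∀ a ∈ visibleAtoms I ω, a.holds f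

theorem IsLocalSolution.comp {ω : Fin r → V} {ω' : Fin r' → V} {f : Fin r' → A}
    (hf : IsLocalSolution I ω' f) (hr : r ≤ r') {e : Fin r → Fin r'}
    (he : ∀ i, ω' (e i) = ω i) : IsLocalSolution I ω (f ∘ e) where
  factorsThrough i j hij := hf.factorsThrough (by rw [he, he, hij])
  holds _ ha := hf.holds _ (rename_mem_visibleAtoms hr he ha)

theorem exists_rep_factorsThrough {α β : Type*} (ω : α → β) :
    ∃ rep : α → α, (∀ i, ω (rep i) = ω i) ∧ rep.FactorsThrough ω :=
  ⟨fun i => Set.rangeSplitting ω (Set.rangeFactorization ω i),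
    fun _ => Set.apply_rangeSplitting ω _,
    fun _ _ hij => congrArg (Set.rangeSplitting ω) (Subtype.ext hij)⟩

/-- The program is maximal, so a step is available as soon as it is valid, in both directions, on
local solutions. -/
theorem Derives.of_isLocalSolution [Finite A] (hI : IsCSPInstance 𝔸 I) (ω : Fin r → V)
    (head : Atom A r) (idb : Option (Atom A r)) (head_arity : head.arity ≤ r)
    (idb_arity : ∀ a ∈ idb, a.arity ≤ r)
    (consistent : ∀ f, IsLocalSolution I ω f → (∀ a ∈ idb, a.holds f) → head.holds f)
    (mirror : ∀ a ∈ idb, ∀ f, IsLocalSolution I ω f → head.holds f → a.holds f)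
    (hidb : ∀ a ∈ idb, Derives 𝔸 r I (fun i => ω (a.scope i)) a.rel) :
    Derives 𝔸 r I (fun i => ω (head.scope i)) head.rel := by
  -- A rule cannot express equality of variables, so variables identified by `ω` are merged.
  obtain ⟨rep, hω, hrep⟩ := exists_rep_factorsThrough ω
  have mem_edb (a : Atom A r) :
      a ∈ (finite_visibleAtoms I ω).toFinset.toList ↔ a ∈ visibleAtoms I ω := by
    rw [Finset.mem_toList, Set.Finite.mem_toFinset]
  have isLocalSolution_comp_rep {f : Fin r → A} (hf : ∀ a ∈ visibleAtoms I ω, a.holds f) :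
      IsLocalSolution I ω (f ∘ rep) :=
    ⟨fun _ _ hij => congrArg f (hrep hij),
      fun a ha => hf (a.rename rep) (rename_mem_visibleAtoms le_rfl hω ha)⟩
  let rule : Rule A 𝔸 r :=
    { head := head.rename rep
      idb := idb.map (Atom.rename · rep)
      edb := (finite_visibleAtoms I ω).toFinset.toList
      head_arity := head_arity
      idb_arity := Option.forall_mem_map.mpr idb_arity
      edb_arity := fun a ha => ((mem_edb a).mp ha).1
      edb_basic := fun a ha => hI _ ((mem_edb a).mp ha).2
      nodup := Finset.nodup_toList _
      consistent := fun f hidb hedb =>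
        consistent (f ∘ rep) (isLocalSolution_comp_rep fun a ha => hedb a ((mem_edb a).mpr ha))
          (Option.forall_mem_map.mp hidb)
      mirror := Option.forall_mem_map.mpr fun a ha f hhead hedb =>
        mirror a ha (f ∘ rep) (isLocalSolution_comp_rep fun b hb => hedb b ((mem_edb b).mpr hb))
          hhead }
  have hstep := Derives.step (I := I) rule ω
    (Option.forall_mem_map.mpr fun a ha => by simpa only [Atom.rename, hω] using hidb a ha)
    (fun a ha => ((mem_edb a).mp ha).2)
  simpa only [rule, Atom.rename, hω] using hstep

theorem Derives.mono [Finite A] [Nonempty V] (hI : IsCSPInstance 𝔸 I) (hr : r ≤ r') {n : ℕ}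
    {ρ : Fin n → V} {R : Set (Fin n → A)} (h : Derives 𝔸 r I ρ R) : Derives 𝔸 r' I ρ R := by
  induction h with
  | base ρ R hc => exact .base ρ R hc
  | step rule ω _ hedb ih =>
    let ω' : Fin r' → V := Function.extend (Fin.castLE hr) ω fun _ => Classical.arbitrary V
    have hω (i : Fin r) : ω' (Fin.castLE hr i) = ω i :=
      (Fin.castLE_injective hr).extend_apply ω _ i
    have holds_edb {f : Fin r' → A} (hf : IsLocalSolution I ω' f) :
        ∀ a ∈ rule.edb, a.holds (f ∘ Fin.castLE hr) :=
      fun a ha => (hf.comp hr hω).holds a ⟨rule.edb_arity a ha, hedb a ha⟩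
    have hhead := Derives.of_isLocalSolution hI ω' (rule.head.rename (Fin.castLE hr))
      (rule.idb.map (Atom.rename · (Fin.castLE hr))) (rule.head_arity.trans hr)
      (Option.forall_mem_map.mpr fun a ha => (rule.idb_arity a ha).trans hr)
      (fun f hf hidb => rule.consistent (f ∘ Fin.castLE hr) (Option.forall_mem_map.mp hidb)
        (holds_edb hf))
      (Option.forall_mem_map.mpr fun a ha f hf hhead =>
        rule.mirror a ha (f ∘ Fin.castLE hr) hhead (holds_edb hf))
      (Option.forall_mem_map.mpr fun a ha => by simpa only [Atom.rename, hω] using ih a ha)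
    simpa only [Atom.rename, hω] using hhead

theorem DerivesGoal.mono [Finite A] [Nonempty V] (hI : IsCSPInstance 𝔸 I) (hr : r ≤ r')
    (h : DerivesGoal 𝔸 r I) : DerivesGoal 𝔸 r' I := by
  obtain ⟨n, ρ, hn, hρ⟩ := h
  exact ⟨n, ρ, hn.trans hr, hρ.mono hI hr⟩

end Derivations

section Unpacking

variable {A X : Type} {m s k : ℕ}

theorem unpackTuple_finProdFinEquiv (σ : Fin m → Fin k → X) (u : Fin m) (i : Fin k) :
    unpackTuple σ (finProdFinEquiv (u, i)) = σ u i :=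
  congrArg (fun p : Fin m × Fin k => σ p.1 p.2) (finProdFinEquiv.symm_apply_apply (u, i))

theorem unpackTuple_injective :
    Function.Injective (unpackTuple : (Fin m → Fin k → X) → Fin (m * k) → X) := by
  intro σ τ h
  funext u i
  simpa only [unpackTuple_finProdFinEquiv] using congrFun h (finProdFinEquiv (u, i))

theorem unpackRel_eq_image (U : Set (Fin m → Fin k → A)) : unpackRel U = unpackTuple '' U := by
  ext t
  exact exists_congr fun u => and_congr_right fun _ => by rw [eq_comm, funext_iff]; rfl

/-- The `m`-tuple of `k`-tuples that unpacks to `f`. -/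
def packTuple (f : Fin (m * k) → X) : Fin m → Fin k → X :=
  fun u i => f (finProdFinEquiv (u, i))

/-- The atom over `A` corresponding to an atom `a` over `A^k`, where each variable `u` of `a`
becomes the block of variables `finProdFinEquiv (u, i)`. -/
def Atom.unpack (a : Atom (Fin k → A) s) : Atom A (s * k) where
  arity := a.arity * k
  scope := unpackTuple fun u i => finProdFinEquiv (a.scope u, i)
  rel := unpackRel a.rel

theorem Atom.holds_unpack (a : Atom (Fin k → A) s) (f : Fin (s * k) → A) :
    a.unpack.holds f ↔ a.holds (packTuple f) := by
  change unpackTuple (fun u => packTuple f (a.scope u)) ∈ unpackRel a.rel ↔ _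
  rw [unpackRel_eq_image, unpackTuple_injective.mem_set_image]
  rfl

theorem unpackTuple_comp_unpack_scope (a : Atom (Fin k → A) s) (σ : Fin s → Fin k → X) :
    (fun t => unpackTuple σ (a.unpack.scope t)) = unpackTuple fun u => σ (a.scope u) :=
  funext fun _ => unpackTuple_finProdFinEquiv σ _ _

end Unpacking

section BubblePath

variable {A V : Type} {𝔸 : RelStruct A} {I : Instance A V} {k s m : ℕ} {z : ℕ → Fin k → V}

/-- The path instance of the bubble power on the tuples `z 1, …, z m` of variables of `I`: the
unary constraints are the constraints of `I` on the entries of one tuple, the binary ones identify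
equal entries of consecutive tuples. -/
def bubblePath (I : Instance A V) (z : ℕ → Fin k → V) (m : ℕ) : PathInstance (Fin k → A) where
  len := m
  B t := {f | ∀ a ∈ visibleAtoms I (z t), a.holds f}
  E t := {p | ∀ i j, z t i = z (t + 1) j → p.1 i = p.2 j}

theorem isCSPInstance_bubblePath (hI : IsCSPInstance 𝔸 I) (z : ℕ → Fin k → V) (m : ℕ) :
    IsCSPInstance (bubblePower 𝔸 k) (bubblePath I z m).toInstance := by
  rintro c (⟨t, -, -, rfl⟩ | ⟨t, -, -, rfl⟩)
  · refine Or.inl ⟨{c | (⟨c.1, c.2.1, c.2.2⟩ : Atom A k) ∈ visibleAtoms I (z t)},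
      fun c hc => hI _ hc.2, congrArg (Sigma.mk 1) ?_⟩
    ext f
    exact ⟨fun h c hc => h _ hc, fun h a ha => h ⟨a.arity, a.scope, a.rel⟩ ha⟩
  · refine Or.inr ⟨{q | z t q.1 = z (t + 1) q.2}, congrArg (Sigma.mk 2) ?_⟩
    ext f
    exact (Prod.forall (p := fun q => z t q.1 = z (t + 1) q.2 → f 0 q.1 = f 1 q.2)).symm

theorem mem_of_mem_constraints_bubblePath
    {c : Σ n : ℕ, (Fin n → ℕ) × Set (Fin n → Fin k → A)}
    (hc : c ∈ (bubblePath I z m).toInstance.constraints) {τ : Fin c.1 → Fin k → A}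
    (holds : ∀ u, ∀ a ∈ visibleAtoms I (z (c.2.1 u)), a.holds (τ u))
    (compatible : ∀ u v i j, z (c.2.1 u) i = z (c.2.1 v) j → τ u i = τ v j) : τ ∈ c.2.2 := by
  rcases hc with ⟨t, -, -, rfl⟩ | ⟨t, -, -, rfl⟩
  · exact holds 0
  · exact compatible 0 1

theorem IsLocalSolution.holds_packTuple {ω : Fin s → ℕ} {f : Fin (s * k) → A}
    (hf : IsLocalSolution I (unpackTuple fun u => z (ω u)) f) {a : Atom (Fin k → A) s}
    (ha : (⟨a.arity, fun i => ω (a.scope i), a.rel⟩ :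
      Σ n : ℕ, (Fin n → ℕ) × Set (Fin n → Fin k → A)) ∈ (bubblePath I z m).toInstance.constraints) :
    a.holds (packTuple f) := by
  have hblock (u : Fin s) : IsLocalSolution I (z (ω u)) (packTuple f u) :=
    hf.comp (Nat.le_mul_of_pos_left k u.pos) fun i => unpackTuple_finProdFinEquiv _ u i
  refine mem_of_mem_constraints_bubblePath ha (fun u => (hblock (a.scope u)).holds) ?_
  intro u v i j hij
  apply hf.factorsThrough
  simpa only [unpackTuple_finProdFinEquiv] using hij

theorem Derives.unpack [Finite A] (hI : IsCSPInstance 𝔸 I) {n : ℕ} {ρ : Fin n → ℕ}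
    {R : Set (Fin n → Fin k → A)} (hn : n ≤ s)
    (h : Derives (bubblePower 𝔸 k) s (bubblePath I z m).toInstance ρ R) :
    Derives 𝔸 (s * k) I (unpackTuple fun u => z (ρ u)) (unpackRel R) := by
  induction h with
  | @base n ρ R hc =>
    let ω : Fin s → ℕ := Function.extend (Fin.castLE hn) ρ 0
    have hω (i : Fin n) : ω (Fin.castLE hn i) = ρ i :=
      (Fin.castLE_injective hn).extend_apply ρ 0 i
    let a : Atom (Fin k → A) s := ⟨n, Fin.castLE hn, R⟩
    have hhead := Derives.of_isLocalSolution hI (unpackTuple fun u => z (ω u)) a.unpack none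
      (Nat.mul_le_mul_right k hn) (by simp)
      (fun f hf _ => (a.holds_unpack f).mpr
        (hf.holds_packTuple (by simpa only [a, hω] using hc)))
      (by simp) (by simp)
    simp only [unpackTuple_comp_unpack_scope, a, hω] at hhead
    exact hhead
  | step rule ω _ hedb ih =>
    rw [← unpackTuple_comp_unpack_scope rule.head fun u => z (ω u)]
    refine Derives.of_isLocalSolution hI _ rule.head.unpack (rule.idb.map Atom.unpack)
      (Nat.mul_le_mul_right k hn)
      (Option.forall_mem_map.mpr fun a ha => Nat.mul_le_mul_right k (rule.idb_arity a ha))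
      (fun f hf hidb => ?consistent) (Option.forall_mem_map.mpr fun a ha f hf hhead => ?mirror)
      (Option.forall_mem_map.mpr fun a ha => ?derives)
    case consistent =>
      exact (rule.head.holds_unpack f).mpr <| rule.consistent (packTuple f)
        (fun a ha => (a.holds_unpack f).mp (Option.forall_mem_map.mp hidb a ha))
        (fun a ha => hf.holds_packTuple (hedb a ha))
    case mirror =>
      exact (a.holds_unpack f).mpr <| rule.mirror a ha (packTuple f)
        ((rule.head.holds_unpack f).mp hhead) fun b hb => hf.holds_packTuple (hedb b hb)
    case derives =>
      rw [unpackTuple_comp_unpack_scope]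
      exact ih a ha (rule.idb_arity a ha)

theorem DerivesGoal.unpack [Finite A] (hI : IsCSPInstance 𝔸 I)
    (h : DerivesGoal (bubblePower 𝔸 k) s (bubblePath I z m).toInstance) :
    DerivesGoal 𝔸 (s * k) I := by
  obtain ⟨n, ρ, hn, hρ⟩ := h
  have hgoal := hρ.unpack hI hn
  rw [unpackRel_eq_image, Set.image_empty] at hgoal
  exact ⟨n * k, _, Nat.mul_le_mul_right k hn, hgoal⟩

end BubblePath

section PathDecomposition

variable {A V : Type} {I : Instance A V} {k p : ℕ}

/-- A path decomposition of `I` of width at most `p`, with its bags indexed by `1, …, len` as in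
`PathInstance`. -/
structure PathDecomposition (I : Instance A V) (p : ℕ) where
  len : ℕ
  bag : ℕ → Set V
  finite_bag : ∀ t, (bag t).Finite
  ncard_bag_le : ∀ t, (bag t).ncard ≤ p + 1
  ordConnected : ∀ v, {t | v ∈ bag t}.OrdConnected
  exists_mem_bag : ∀ v, ∃ t ∈ Set.Icc 1 len, v ∈ bag t
  exists_range_subset_bag : ∀ c ∈ I.constraints, ∃ t ∈ Set.Icc 1 len, Set.range c.2.1 ⊆ bag t

theorem PathwidthLE.nonempty_pathDecomposition (h : PathwidthLE I p) :
    Nonempty (PathDecomposition I p) := by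
  obtain ⟨m, U, hcover, hcard, hinterval, hscope⟩ := h
  let bag (t : ℕ) : Set V := {v | ∃ i : Fin m, i + 1 = t ∧ v ∈ U i}
  have bag_succ (i : Fin m) : bag (i + 1) = U i := by
    ext v
    exact ⟨fun ⟨j, hj, hv⟩ => Fin.ext (Nat.succ_injective hj) ▸ hv, fun hv => ⟨i, rfl, hv⟩⟩
  have hbag (t : ℕ) : (bag t).Finite ∧ (bag t).ncard ≤ p + 1 := by
    by_cases ht : ∃ i : Fin m, i + 1 = t
    · obtain ⟨i, rfl⟩ := ht
      exact bag_succ i ▸ hcard i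
    · have hempty : bag t = ∅ :=
        Set.eq_empty_of_forall_notMem fun v ⟨i, hi, _⟩ => ht ⟨i, hi⟩
      simp [hempty]
  have mem_Icc (i : Fin m) : (i : ℕ) + 1 ∈ Set.Icc 1 m := ⟨by omega, i.isLt⟩
  refine ⟨m, bag, fun t => (hbag t).1, fun t => (hbag t).2, fun v => ⟨?_⟩, fun v => ?_,
    fun c hc => ?_⟩
  · rintro _ ⟨i, rfl, hi⟩ _ ⟨j, rfl, hj⟩ q ⟨hiq, hqj⟩
    exact ⟨⟨q - 1, by omega⟩, Nat.sub_add_cancel (by omega),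
      hinterval i j _ (Fin.le_def.mpr (Nat.le_sub_one_of_lt hiq))
        (Fin.le_def.mpr (Nat.sub_le_of_le_add hqj)) v hi hj⟩
  · obtain ⟨i, hi⟩ := hcover v
    exact ⟨i + 1, mem_Icc i, bag_succ i ▸ hi⟩
  · obtain ⟨i, hi⟩ := hscope c hc
    exact ⟨i + 1, mem_Icc i, bag_succ i ▸ hi⟩

theorem exists_fin_subset_range [Nonempty V] {S : Set V} (hS : S.Finite) (hk : S.ncard ≤ k) :
    ∃ z : Fin k → V, S ⊆ Set.range z := by
  have := hS.to_subtype
  let e : S → Fin k := fun v => Fin.castLE hk (Finite.equivFin S v)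
  have he : Function.Injective e := (Fin.castLE_injective hk).comp (Finite.equivFin S).injective
  exact ⟨Function.extend e Subtype.val fun _ => Classical.arbitrary V,
    fun v hv => ⟨e ⟨v, hv⟩, he.extend_apply _ _ _⟩⟩

theorem IsSolution.bubblePath_apply_eq {z : ℕ → Fin k → V} {m : ℕ} {g : ℕ → Fin k → A}
    (hg : IsSolution (bubblePath I z m) g) {t t' : ℕ} (ht : 1 ≤ t) (htt' : t ≤ t') (ht' : t' ≤ m)
    {v : V} {pos : ℕ → Fin k} (hpos : ∀ q ∈ Set.Icc t t', z q (pos q) = v) :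
    g t (pos t) = g t' (pos t') := by
  induction t', htt' using Nat.le_induction with
  | base => rfl
  | succ q htq ih =>
    calc g t (pos t)
      _ = g q (pos q) :=
        ih (by omega) fun q' hq' => hpos q' (Set.Icc_subset_Icc_right q.le_succ hq')
      _ = g (q + 1) (pos (q + 1)) := hg.2 q (by omega) ht' (pos q) (pos (q + 1)) <| by
        rw [hpos q ⟨htq, q.le_succ⟩, hpos (q + 1) ⟨by omega, le_rfl⟩]

theorem PathDecomposition.satisfiable_of_isSolution (D : PathDecomposition I p)
    (hinj : ∀ c ∈ I.constraints, Function.Injective c.2.1) {z : ℕ → Fin (p + 1) → V}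
    (hz : ∀ t, D.bag t ⊆ Set.range (z t)) {g : ℕ → Fin (p + 1) → A}
    (hg : IsSolution (bubblePath I z D.len) g) : I.Satisfiable := by
  choose! pos hpos using fun t v (hv : v ∈ D.bag t) => hz t hv
  choose home home_mem_Icc mem_home using D.exists_mem_bag
  have agree {v : V} {t t' : ℕ} (ht : t ∈ Set.Icc 1 D.len) (ht' : t' ∈ Set.Icc 1 D.len)
      (hv : v ∈ D.bag t) (hv' : v ∈ D.bag t') : g t (pos t v) = g t' (pos t' v) := by
    wlog htt' : t ≤ t' generalizing t t'
    · exact (this ht' ht hv' hv (le_of_not_ge htt')).symm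
    · exact hg.bubblePath_apply_eq (pos := fun q => pos q v) ht.1 htt' ht'.2
        fun q hq => hpos q v ((D.ordConnected v).out hv hv' hq)
  refine ⟨fun v => g (home v) (pos (home v) v), fun c hc => ?_⟩
  obtain ⟨t, ht, hct⟩ := D.exists_range_subset_bag c hc
  have mem_bag (i : Fin c.1) : c.2.1 i ∈ D.bag t := hct ⟨i, rfl⟩
  have arity_le : c.1 ≤ p + 1 := calc
    c.1 = (Set.range c.2.1).ncard := by
      rw [← Set.image_univ, Set.ncard_image_of_injective _ (hinj c hc), Set.ncard_univ,
        Nat.card_fin]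
    _ ≤ (D.bag t).ncard := Set.ncard_le_ncard hct (D.finite_bag t)
    _ ≤ p + 1 := D.ncard_bag_le t
  have visible : (⟨c.1, fun i => pos t (c.2.1 i), c.2.2⟩ : Atom A (p + 1)) ∈
      visibleAtoms I (z t) := by
    refine ⟨arity_le, ?_⟩
    simpa only [hpos t _ (mem_bag _)] using hc
  have hmem := hg.1 t ht.1 ht.2 _ visible
  simpa only [Atom.holds, agree (home_mem_Icc _) ht (mem_home _) (mem_bag _)] using hmem

theorem exists_bubblePath_not_isSolution [Nonempty V] (hp : PathwidthLE I p)
    (hinj : ∀ c ∈ I.constraints, Function.Injective c.2.1) (h : ¬I.Satisfiable) :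
    ∃ (z : ℕ → Fin (p + 1) → V) (m : ℕ), ¬∃ g, IsSolution (bubblePath I z m) g := by
  obtain ⟨D⟩ := hp.nonempty_pathDecomposition
  choose z hz using fun t => exists_fin_subset_range (D.finite_bag t) (D.ncard_bag_le t)
  exact ⟨z, D.len, fun ⟨_, hg⟩ => h (D.satisfiable_of_isSolution hinj hz hg)⟩

end PathDecomposition

section BlowUp

variable {A V : Type} {I : Instance A V}

/-- The instance in which every variable of `I` has infinitely many copies `(v, 0), (v, 1), …` and
every constraint of `I` is imposed on all choices of pairwise distinct copies. Every instance that
maps to it has injective scopes. -/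
def blowUp (I : Instance A V) : Instance A (V × ℕ) where
  constraints := {c | Function.Injective c.2.1 ∧ (⟨c.1, fun i => (c.2.1 i).1, c.2.2⟩ :
    Σ n : ℕ, (Fin n → V) × Set (Fin n → A)) ∈ I.constraints}

theorem exists_injective_comp_eq_const {α : Type*} [Finite α] (f : ℕ → α) :
    ∃ a, ∃ e : ℕ → ℕ, Function.Injective e ∧ ∀ i, f (e i) = a := by
  obtain ⟨a, ha⟩ := Finite.exists_infinite_fiber f
  let e := Infinite.natEmbedding (f ⁻¹' {a})
  exact ⟨a, fun i => e i, Subtype.val_injective.comp e.injective, fun i => (e i).2⟩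

theorem satisfiable_of_satisfiable_blowUp [Finite A] (h : (blowUp I).Satisfiable) :
    I.Satisfiable := by
  obtain ⟨f, hf⟩ := h
  choose g copy copy_injective hcopy using fun v => exists_injective_comp_eq_const fun j => f (v, j)
  refine ⟨g, fun ⟨n, ρ, R⟩ hc => ?_⟩
  have hinj : Function.Injective fun i : Fin n => (ρ i, copy (ρ i) i) := by
    intro i j hij
    obtain ⟨hρ, hij⟩ := Prod.ext_iff.mp hij
    simp only at hρ hij
    exact Fin.ext (copy_injective (ρ j) (hρ ▸ hij))
  simpa only [hcopy] using hf ⟨n, fun i => (ρ i, copy (ρ i) i), R⟩ ⟨hinj, hc⟩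

end BlowUp

theorem statement16_general {A : Type} [Finite A] (𝔸 : RelStruct A) (k : ℕ) (hk : 1 ≤ k)
    (hdual : HasPathwidthDuality 𝔸 (k - 1)) (s : ℕ)
    (hs : ∀ K : PathInstance (Fin k → A),
      IsCSPInstance (bubblePower 𝔸 k) K.toInstance →
      (¬∃ f : ℕ → Fin k → A, IsSolution K f) →
      DerivesGoal (bubblePower 𝔸 k) s K.toInstance)
    {r : ℕ} (hr : k * s ≤ r) {V : Type} {I : Instance A V} (hI : IsCSPInstance 𝔸 I) :
    DerivesGoal 𝔸 r I ↔ ¬I.Satisfiable := by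
  refine ⟨DerivesGoal.not_satisfiable, fun hunsat => ?_⟩
  obtain ⟨p, rfl⟩ := Nat.exists_eq_add_of_le' hk
  obtain ⟨W, J, φ, hJ, hJunsat, hpathwidth, hφ⟩ :=
    hdual _ (blowUp I) (fun c hc => hI _ hc.2) (mt satisfiable_of_satisfiable_blowUp hunsat)
  suffices hgoal : DerivesGoal 𝔸 r J from
    hgoal.map (fun w => (φ w).1) fun c hc => (hφ c hc).2
  cases isEmpty_or_nonempty W
  · exact derivesGoal_of_isEmpty hJunsat
  · have hinj (c) (hc : c ∈ J.constraints) : Function.Injective c.2.1 :=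
      Function.Injective.of_comp (f := φ) (hφ c hc).1
    obtain ⟨z, m, hz⟩ := exists_bubblePath_not_isSolution hpathwidth hinj hJunsat
    have hgoal := (hs _ (isCSPInstance_bubblePath hJ z m) hz).unpack hJ
    exact hgoal.mono hJ ((Nat.mul_comm s _).trans_le hr)

/-- from path instances of the bubble power to all
instances. Let `𝔸` be a finite relational structure with pathwidth duality
`k - 1` and let `s` be such that `𝒫_{𝔸^(k)}^s(I) ⊢ G` for every unsatisfiable
path instance `I` of `CSP(𝔸^(k))`. Then `𝒫_𝔸^{k(s+2)}` decides `CSP(𝔸)`. -/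
theorem statement16 {A : Type} [Finite A] (𝔸 : RelStruct A)
    (hfin : 𝔸.basic.Finite)
    (k : ℕ) (hk : 1 ≤ k)
    (hdual : HasPathwidthDuality 𝔸 (k - 1))
    (s : ℕ)
    (hs : ∀ K : PathInstance (Fin k → A),
      IsCSPInstance (bubblePower 𝔸 k) K.toInstance →
      (¬∃ f : ℕ → Fin k → A, IsSolution K f) →
      DerivesGoal (bubblePower 𝔸 k) s K.toInstance) :
    ∀ (V : Type) (I : Instance A V), IsCSPInstance 𝔸 I →
      (DerivesGoal 𝔸 (k * (s + 2)) I ↔ ¬I.Satisfiable) := by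
  exact fun _ _ hI =>
    statement16_general 𝔸 k hk hdual s hs (Nat.mul_le_mul_left k (Nat.le_add_right s 2)) hI

end CSPPaper
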